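/- Fix real numbers x0 < x1 and y ∈ (x0, x1], and let α : ℝ → ℝ be Lebesgue integrable on (x0, x1), with ‖α‖ := ∫_{x0}^{x1} |α|. Then there exists a Lebesgue integrable function g : ℝ → ℂ which vanishes outside [0, 2(y − x0)], satisfies ∫_ℝ |g| ≤ e^{‖α‖} − 1, and such that for every ω ∈ ℝ, E_α^{(x0,y)}(ω) = 1 + ∫_ℝ g(t)·e^{iωt} dt. -/

import Mathlib

open MeasureTheory

/-- The iterates `A_ω^j 𝟙` of the conjugate-linear Volterra operator
`A_ω f(t) = ∫_{x0}^t α(s) e^{2i(s−x0)ω} conj(f(s)) ds`. -/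
noncomputable def Aiter (x0 : ℝ) (α : ℝ → ℝ) (ω : ℂ) : ℕ → ℝ → ℂ
  | 0 => fun _ => 1
  | j + 1 => fun t =>
      ∫ s in x0..t,
        (α s : ℂ) * Complex.exp (2 * Complex.I * ((s : ℂ) - (x0 : ℂ)) * ω)
          * (starRingEnd ℂ) (Aiter x0 α ω j s)

/-- The harmonic exponential `E_α^{(x0,y)}(ω) = Σ_{j≥0} A_ω^j 𝟙(y)`. -/
noncomputable def harmE (x0 y : ℝ) (α : ℝ → ℝ) (ω : ℂ) : ℂ :=
  ∑' j : ℕ, Aiter x0 α ω j y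

/-!
Lift the Volterra recursion from `ℂ` to `L¹(ℝ)`. For real `ω`, multiplying the complex conjugate of
the Fourier transform of a real density by `exp (2i(s - x0)ω)` amounts to reflecting that density
through `v ↦ 2(s - x0) - v`, an isometry of `L¹(ℝ)`. As `A_ω^1(t)` is the Fourier transform of
`v ↦ α(x0 + v/2)/2` on `(0, 2(t - x0)]`, running the recursion with reflections from this density
gives densities of all later iterates. With `B(t) = ∫_{x0}^t |α|`, the `j`-th one has norm at most
`B(t)^j / j!`, and its support stays in `[0, 2(t - x0)]`, since `0 ≤ v ≤ 2(s - x0)` and `s ≤ t`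
give `0 ≤ 2(s - x0) - v ≤ 2(t - x0)`. The sum over `j ≥ 1` is the required density.
-/

section HarmonicDensity

open Set Filter Topology Complex ComplexConjugate
open scoped ENNReal Interval

lemma absolutelyContinuousOnInterval_pow {f : ℝ → ℝ} {a b : ℝ}
    (hf : AbsolutelyContinuousOnInterval f a b) (n : ℕ) :
    AbsolutelyContinuousOnInterval (fun x => f x ^ n) a b := by
  induction n with
  | zero =>
    simpa using (contDiff_const (c := (1 : ℝ))).contDiffOn.absolutelyContinuousOnInterval
  | succ n ih => simpa only [pow_succ] using ih.fun_mul hf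

lemma integral_mul_integral_pow {f : ℝ → ℝ} {a b : ℝ} (hf : IntervalIntegrable f volume a b)
    (n : ℕ) :
    ∫ x in a..b, f x * (∫ r in a..x, f r) ^ n = (∫ x in a..b, f x) ^ (n + 1) / (n + 1) := by
  set F : ℝ → ℝ := fun x => ∫ r in a..x, f r with hF
  have hFn : AbsolutelyContinuousOnInterval (fun x => F x ^ (n + 1)) a b :=
    absolutelyContinuousOnInterval_pow
      (hf.absolutelyContinuousOnInterval_intervalIntegral left_mem_uIcc) _
  have hderiv : ∀ᵐ x, x ∈ Ι a b → deriv (fun x => F x ^ (n + 1)) x = (n + 1) * (f x * F x ^ n) := by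
    filter_upwards [hf.ae_hasDerivAt_integral] with x hx hxab
    have hFx : HasDerivAt F (f x) x := hx (uIoc_subset_uIcc hxab) a left_mem_uIcc
    rw [(hFx.fun_pow (n + 1)).deriv]
    push_cast
    ring
  have hftc : ∫ x in a..b, (n + 1) * (f x * F x ^ n) = F b ^ (n + 1) := by
    rw [← intervalIntegral.integral_congr_ae hderiv, hFn.integral_deriv_eq_sub]
    simp [hF]
  rw [intervalIntegral.integral_const_mul] at hftc
  rw [eq_div_iff (by positivity), mul_comm, hftc]

section Volterra

variable {E F : Type*} [NormedAddCommGroup E] [NormedSpace ℝ E]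
  [NormedAddCommGroup F] [NormedSpace ℝ F]
  {x0 t : ℝ} {α : ℝ → ℝ} {T : ℝ → E → E} {u₀ : ℝ → E}

/-- The iterates of the Volterra operator `u ↦ (t ↦ ∫_{x0}^t α(s) T_s(u(s)) ds)` in a Banach space,
starting from the curve `u₀`. -/
noncomputable def volterraIter (x0 : ℝ) (α : ℝ → ℝ) (T : ℝ → E → E) (u₀ : ℝ → E) : ℕ → ℝ → E
  | 0 => u₀
  | j + 1 => fun t => ∫ s in x0..t, α s • T s (volterraIter x0 α T u₀ j s)

lemma continuous_volterraIter (hα : ∀ a b, IntervalIntegrable α volume a b)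
    (hT : Continuous fun p : ℝ × E => T p.1 p.2) (hu₀ : Continuous u₀) (j : ℕ) :
    Continuous (volterraIter x0 α T u₀ j) := by
  induction j with
  | zero => exact hu₀
  | succ j ih =>
    exact intervalIntegral.continuous_primitive (fun _ _ => (hα _ _).smul_continuousOn
      (hT.comp (continuous_id.prodMk ih)).continuousOn) x0

lemma intervalIntegrable_smul_volterraIter (hα : ∀ a b, IntervalIntegrable α volume a b)
    (hT : Continuous fun p : ℝ × E => T p.1 p.2) (hu₀ : Continuous u₀) (j : ℕ) (a b : ℝ) :
    IntervalIntegrable (fun s => α s • T s (volterraIter x0 α T u₀ j s)) volume a b :=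
  (hα _ _).smul_continuousOn
    (hT.comp (continuous_id.prodMk (continuous_volterraIter hα hT hu₀ j))).continuousOn

lemma norm_volterraIter_le (hα : ∀ a b, IntervalIntegrable α volume a b) (hT : ∀ s v, ‖T s v‖ ≤ ‖v‖)
    (hu₀ : ∀ t, x0 ≤ t → ‖u₀ t‖ ≤ ∫ s in x0..t, |α s|) (ht : x0 ≤ t) (j : ℕ) :
    ‖volterraIter x0 α T u₀ j t‖ ≤ (∫ s in x0..t, |α s|) ^ (j + 1) / (j + 1).factorial := by
  have habs (t : ℝ) : IntervalIntegrable (fun s => |α s|) volume x0 t := (hα x0 t).abs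
  induction j generalizing t with
  | zero => simpa [volterraIter] using hu₀ t ht
  | succ j ih =>
    set B : ℝ → ℝ := fun t => ∫ s in x0..t, |α s|
    have hBcont : Continuous B := intervalIntegral.continuous_primitive (fun _ _ => (hα _ _).abs) x0
    calc ‖volterraIter x0 α T u₀ (j + 1) t‖
        ≤ ∫ s in x0..t, |α s| * (B s ^ (j + 1) / (j + 1).factorial) := by
          refine intervalIntegral.norm_integral_le_of_norm_le ht
            (ae_of_all _ fun s hs => ?_)
            ((habs t).mul_continuousOn ((hBcont.pow _).div_const _).continuousOn)
          rw [norm_smul, Real.norm_eq_abs]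
          gcongr
          exact (hT s _).trans (ih hs.1.le)
      _ = (∫ s in x0..t, |α s| * B s ^ (j + 1)) / (j + 1).factorial := by
          simp_rw [← mul_div_assoc, intervalIntegral.integral_div]
      _ = B t ^ (j + 2) / (j + 2).factorial := by
          rw [integral_mul_integral_pow (habs t), div_div, Nat.factorial_succ (j + 1)]
          push_cast
          rfl

lemma hasSum_pow_succ_div_factorial (b : ℝ) :
    HasSum (fun j : ℕ => b ^ (j + 1) / (j + 1).factorial) (Real.exp b - 1) := by
  have hexp := NormedSpace.expSeries_div_hasSum_exp b
  rw [← Real.exp_eq_exp_ℝ] at hexp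
  simpa using (hasSum_nat_add_iff' 1).2 hexp

lemma map_volterraIter [CompleteSpace E] [CompleteSpace F]
    (hα : ∀ a b, IntervalIntegrable α volume a b) (hT : Continuous fun p : ℝ × E => T p.1 p.2)
    (hu₀ : Continuous u₀) {S : ℝ → F → F} {w₀ : ℝ → F} {L : E →L[ℝ] F}
    (hLT : ∀ s v, L (T s v) = S s (L v)) (hLu₀ : ∀ t, x0 ≤ t → L (u₀ t) = w₀ t) (ht : x0 ≤ t)
    (j : ℕ) : L (volterraIter x0 α T u₀ j t) = volterraIter x0 α S w₀ j t := by
  induction j generalizing t with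
  | zero => exact hLu₀ t ht
  | succ j ih =>
    simp only [volterraIter]
    rw [← L.intervalIntegral_comp_comm (intervalIntegrable_smul_volterraIter hα hT hu₀ j _ _)]
    refine intervalIntegral.integral_congr fun s hs => ?_
    rw [uIcc_of_le ht] at hs
    simp only [map_smul, hLT, ih hs.1]

lemma intervalIntegral_mem_of_isClosed [CompleteSpace E] {P : Submodule ℝ E}
    (hP : IsClosed (P : Set E)) {f : ℝ → E} {a b : ℝ} (hf : ∀ s ∈ Ι a b, f s ∈ P) :
    ∫ s in a..b, f s ∈ P := by
  by_cases hint : IntervalIntegrable f volume a b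
  · rw [← P.ker_mkQ, LinearMap.mem_ker, ← P.mkQL_apply, ← P.mkQL.intervalIntegral_comp_comm hint]
    refine intervalIntegral.integral_zero_ae (ae_of_all _ fun s hs => ?_)
    rw [P.mkQL_apply, ← LinearMap.mem_ker, P.ker_mkQ]
    exact hf s hs
  · rw [intervalIntegral.integral_undef hint]
    exact P.zero_mem

lemma volterraIter_mem [CompleteSpace E] {P : ℝ → Submodule ℝ E}
    (hP : ∀ t, IsClosed (P t : Set E))
    (hT : ∀ s t v, x0 ≤ s → s ≤ t → v ∈ P s → T s v ∈ P t)
    (hu₀ : ∀ t, x0 ≤ t → u₀ t ∈ P t) (ht : x0 ≤ t) (j : ℕ) :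
    volterraIter x0 α T u₀ j t ∈ P t := by
  induction j generalizing t with
  | zero => exact hu₀ t ht
  | succ j ih =>
    refine intervalIntegral_mem_of_isClosed (hP t) fun s hs => (P t).smul_mem _ ?_
    rw [uIoc_of_le ht] at hs
    exact hT s t _ hs.1.le hs.2 (ih hs.1.le)

end Volterra

section Iterates

variable {x0 : ℝ} {α : ℝ → ℝ}

lemma Aiter_succ_eq_volterraIter (ω : ℂ) (j : ℕ) :
    Aiter x0 α ω (j + 1) = volterraIter x0 α (fun s z => exp (2 * I * (s - x0) * ω) * conj z)
      (Aiter x0 α ω 1) j := by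
  induction j with
  | zero => rfl
  | succ j ih =>
    rw [Aiter, ih]
    simp only [volterraIter, real_smul, mul_assoc]

lemma Aiter_congr {β : ℝ → ℝ} {t : ℝ} (hαβ : EqOn α β (Ioc x0 t)) (ht : x0 ≤ t) (ω : ℂ) (j : ℕ) :
    Aiter x0 α ω j t = Aiter x0 β ω j t := by
  induction j generalizing t with
  | zero => rfl
  | succ j ih =>
    refine intervalIntegral.integral_congr_ae (ae_of_all _ fun s hs => ?_)
    rw [uIoc_of_le ht] at hs
    rw [hαβ hs, ih (hαβ.mono (Ioc_subset_Ioc_right hs.2)) hs.1.le]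

lemma harmE_eq_of_hasSum {y : ℝ} {ω z : ℂ} (h : HasSum (fun j => Aiter x0 α ω (j + 1) y) z) :
    harmE x0 y α ω = 1 + z := by
  have hall := (hasSum_nat_add_iff (f := fun j => Aiter x0 α ω j y) 1).1 h
  simpa [harmE, Aiter, add_comm] using hall.tsum_eq

lemma harmE_congr {β : ℝ → ℝ} {y : ℝ} (hαβ : EqOn α β (Ioc x0 y)) (hy : x0 ≤ y) (ω : ℂ) :
    harmE x0 y α ω = harmE x0 y β ω :=
  tsum_congr (Aiter_congr hαβ hy ω)

end Iterates

section Reflection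

variable {E : Type*} [NormedAddCommGroup E] {p : ℝ≥0∞}

/-- The reflection `f ↦ f(c - ·)` of `Lᵖ(ℝ)`. -/
noncomputable def lpReflect (c : ℝ) : Lp E p (volume : Measure ℝ) →+ Lp E p (volume : Measure ℝ) :=
  Lp.compMeasurePreserving (fun v => c - v) (Measure.measurePreserving_sub_left volume c)

lemma coeFn_lpReflect (c : ℝ) (f : Lp E p (volume : Measure ℝ)) :
    lpReflect c f =ᵐ[volume] fun v => f (c - v) :=
  Lp.coeFn_compMeasurePreserving f (Measure.measurePreserving_sub_left volume c)

lemma norm_lpReflect (c : ℝ) (f : Lp E p (volume : Measure ℝ)) : ‖lpReflect c f‖ = ‖f‖ :=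
  Lp.norm_compMeasurePreserving f (Measure.measurePreserving_sub_left volume c)

lemma continuous_lpReflect [Fact (1 ≤ p)] (hp : p ≠ ∞) :
    Continuous fun q : ℝ × Lp E p (volume : Measure ℝ) => lpReflect q.1 q.2 :=
  continuous_snd.compMeasurePreservingLp
    (g := fun q => (⟨fun v => q.1 - v, by fun_prop⟩ : C(ℝ, ℝ)))
    (ContinuousMap.continuous_of_continuous_uncurry _
      (by simp only [Function.uncurry_def, ContinuousMap.coe_mk]; fun_prop))
    (fun q => Measure.measurePreserving_sub_left volume q.1) hp

end Reflection

section Fourier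

variable (ω : ℝ)

lemma memLp_top_exp_I_mul : MemLp (fun v : ℝ => exp (I * ω * v)) ∞ volume :=
  memLp_top_of_bound (by fun_prop) 1 (ae_of_all _ fun v => by simp [norm_exp])

/-- The Fourier transform `f ↦ ∫ f(v) exp(iωv) dv` at the frequency `ω`, as a continuous functional
on real-valued `L¹(ℝ)`. -/
noncomputable def fourierFunctional : (ℝ →₁[volume] ℝ) →L[ℝ] ℂ :=
  ((ContinuousLinearMap.lsmul ℝ ℝ).lpPairing volume 1 ∞).flip (memLp_top_exp_I_mul ω).toLp

lemma fourierFunctional_apply (f : ℝ →₁[volume] ℝ) :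
    fourierFunctional ω f = ∫ v, f v * exp (I * ω * v) := by
  rw [fourierFunctional, ContinuousLinearMap.flip_apply,
    ContinuousLinearMap.lpPairing_eq_integral]
  refine integral_congr_ae ?_
  filter_upwards [(memLp_top_exp_I_mul ω).coeFn_toLp] with v hv
  simp [hv]

lemma fourierFunctional_lpReflect (c : ℝ) (f : ℝ →₁[volume] ℝ) :
    fourierFunctional ω (lpReflect c f) = exp (I * ω * c) * conj (fourierFunctional ω f) := by
  have hexp (v : ℝ) : exp (I * ω * (c - v : ℝ)) = exp (I * ω * c) * conj (exp (I * ω * v)) := by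
    rw [← exp_conj, ← exp_add]
    congr 1
    simp
    ring
  calc fourierFunctional ω (lpReflect c f)
      = ∫ v, f (c - v) * exp (I * ω * v) := by
        rw [fourierFunctional_apply]
        refine integral_congr_ae ?_
        filter_upwards [coeFn_lpReflect c f] with v hv
        rw [hv]
    _ = ∫ v, f v * exp (I * ω * (c - v : ℝ)) := by
        rw [← integral_sub_left_eq_self _ volume c]
        simp only [sub_sub_cancel]
    _ = exp (I * ω * c) * conj (fourierFunctional ω f) := by
        rw [fourierFunctional_apply, ← integral_conj, ← integral_const_mul]
        refine integral_congr_ae (ae_of_all _ fun v => ?_)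
        simp only [hexp, map_mul, conj_ofReal]
        ring

end Fourier

section Truncation

variable {E : Type*} [NormedAddCommGroup E]

/-- The `L¹` class of the truncation of `f` to `(a, b]`. -/
noncomputable def truncL1 {f : ℝ → E} (hf : Integrable f) (a b : ℝ) : ℝ →₁[volume] E :=
  (hf.indicator measurableSet_Ioc : Integrable ((Ioc a b).indicator f)).toL1

lemma coeFn_truncL1 {f : ℝ → E} (hf : Integrable f) (a b : ℝ) :
    truncL1 hf a b =ᵐ[volume] (Ioc a b).indicator f :=
  Integrable.coeFn_toL1 _

lemma norm_truncL1 {f : ℝ → E} (hf : Integrable f) {a b : ℝ} (hab : a ≤ b) :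
    ‖truncL1 hf a b‖ = ∫ v in a..b, ‖f v‖ := by
  rw [truncL1, L1.norm_of_fun_eq_integral_norm, intervalIntegral.integral_of_le hab,
    ← integral_indicator measurableSet_Ioc]
  simp only [norm_indicator_eq_indicator_norm]

lemma continuous_truncL1 {f : ℝ → E} (hf : Integrable f) (a : ℝ) : Continuous (truncL1 hf a) := by
  refine continuous_iff_continuousAt.2 fun b => tendsto_iff_norm_sub_tendsto_zero.2 ?_
  have hint (c : ℝ) : Integrable ((Ioc a c).indicator f) := hf.indicator measurableSet_Ioc
  have hnorm (c : ℝ) : ‖truncL1 hf a c - truncL1 hf a b‖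
      = ∫ v, ‖(Ioc a c).indicator f v - (Ioc a b).indicator f v‖ := by
    rw [truncL1, truncL1, ← Integrable.toL1_sub _ _ (hint c) (hint b),
      L1.norm_of_fun_eq_integral_norm]
    rfl
  simp only [hnorm]
  rw [← integral_zero ℝ ℝ]
  refine tendsto_integral_filter_of_dominated_convergence (fun v => ‖f v‖ + ‖f v‖)
    (.of_forall fun c => ((hint c).sub (hint b)).norm.aestronglyMeasurable)
    (.of_forall fun c => ae_of_all _ fun v => ?_) (hf.norm.add hf.norm) ?_
  · rw [norm_norm]
    exact (norm_sub_le _ _).trans (add_le_add (norm_indicator_le_norm_self f v)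
      (norm_indicator_le_norm_self f v))
  · filter_upwards [Measure.ae_ne volume b] with v hv
    have hmem : ∀ᶠ c in 𝓝 b, (v ≤ c ↔ v ≤ b) := by
      rcases hv.lt_or_gt with hvb | hbv
      · filter_upwards [lt_mem_nhds hvb] with c hc using iff_of_true hc.le hvb.le
      · filter_upwards [gt_mem_nhds hbv] with c hc using iff_of_false hc.not_ge hbv.not_ge
    refine tendsto_const_nhds.congr' ?_
    filter_upwards [hmem] with c hc
    simp [indicator_apply, hc]

end Truncation

section Support

variable {X E : Type*} [MeasurableSpace X] [NormedAddCommGroup E] [NormedSpace ℝ E]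
  {p : ℝ≥0∞} [Fact (1 ≤ p)] {μ : Measure X}

variable (E p μ) in
/-- The subspace of `Lᵖ` consisting of the functions vanishing almost everywhere outside `s`, as the
kernel of the restriction to the complement of `s`. -/
noncomputable def lpSupported (s : Set X) : Submodule ℝ (Lp E p μ) :=
  (LpToLpRestrictCLM X E ℝ μ p sᶜ).ker

lemma isClosed_lpSupported (s : Set X) : IsClosed (lpSupported E p μ s : Set (Lp E p μ)) :=
  (LpToLpRestrictCLM X E ℝ μ p sᶜ).isClosed_ker

lemma mem_lpSupported_iff {s : Set X} (hs : MeasurableSet s) {f : Lp E p μ} :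
    f ∈ lpSupported E p μ s ↔ ∀ᵐ x ∂μ, x ∉ s → f x = 0 := by
  have hf := LpToLpRestrictCLM_coeFn (μ := μ) (p := p) ℝ sᶜ f
  simp only [lpSupported, LinearMap.mem_ker, ← mem_compl_iff, ← ae_restrict_iff' hs.compl]
  rw [ContinuousLinearMap.coe_coe, Lp.eq_zero_iff_ae_eq_zero]
  exact ⟨hf.symm.trans, hf.trans⟩

lemma indicator_ae_eq_of_mem_lpSupported {s : Set X} (hs : MeasurableSet s) {f : Lp E p μ}
    (hf : f ∈ lpSupported E p μ s) : s.indicator f =ᵐ[μ] f := by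
  filter_upwards [(mem_lpSupported_iff hs).1 hf] with x hx
  exact indicator_apply_eq_self.2 hx

lemma lpReflect_mem_lpSupported {c : ℝ} {s t : Set ℝ} (hs : MeasurableSet s) (ht : MeasurableSet t)
    (hst : ∀ v, c - v ∈ s → v ∈ t) {f : Lp E p (volume : Measure ℝ)}
    (hf : f ∈ lpSupported E p volume s) : lpReflect c f ∈ lpSupported E p volume t := by
  rw [mem_lpSupported_iff hs] at hf
  rw [mem_lpSupported_iff ht]
  filter_upwards [coeFn_lpReflect c f,
    (Measure.measurePreserving_sub_left volume c).quasiMeasurePreserving.ae hf] with v hv hfv hvt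
  rw [hv, hfv (mt (hst v) hvt)]

end Support

section Density

variable {x0 : ℝ} {α : ℝ → ℝ}

/-- The density of `A_ω^1(t)`: the function `v ↦ α(x0 + v/2)/2` on `(0, 2(t - x0)]`, obtained by
substituting `v = 2(s - x0)` in the integral defining `A_ω^1(t)`. -/
noncomputable def firstDensity (x0 : ℝ) (hα : Integrable α) (t : ℝ) : ℝ →₁[volume] ℝ :=
  truncL1 (((hα.comp_add_left x0).comp_div two_ne_zero).const_mul 2⁻¹) 0 (2 * (t - x0))

lemma integral_comp_add_half {E : Type*} [NormedAddCommGroup E] [NormedSpace ℝ E] (f : ℝ → E)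
    (x0 t : ℝ) : ∫ v in 0..2 * (t - x0), (2⁻¹ : ℝ) • f (x0 + v / 2) = ∫ s in x0..t, f s := by
  rw [intervalIntegral.integral_smul, intervalIntegral.inv_smul_integral_comp_add_div]
  congr 1 <;> ring

lemma coeFn_firstDensity (hα : Integrable α) (t : ℝ) : firstDensity x0 hα t
    =ᵐ[volume] (Ioc 0 (2 * (t - x0))).indicator fun v => 2⁻¹ * α (x0 + v / 2) :=
  coeFn_truncL1 _ _ _

lemma continuous_firstDensity (hα : Integrable α) : Continuous (firstDensity x0 hα) :=
  (continuous_truncL1 _ 0).comp (by fun_prop)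

lemma norm_firstDensity (hα : Integrable α) {t : ℝ} (ht : x0 ≤ t) :
    ‖firstDensity x0 hα t‖ = ∫ s in x0..t, |α s| := by
  rw [firstDensity, norm_truncL1 _ (by linarith), ← integral_comp_add_half (fun s => |α s|)]
  simp only [norm_mul, Real.norm_eq_abs, abs_of_pos (inv_pos.2 (two_pos (α := ℝ))), smul_eq_mul]

lemma firstDensity_mem_lpSupported (hα : Integrable α) (t : ℝ) :
    firstDensity x0 hα t ∈ lpSupported ℝ 1 volume (Icc 0 (2 * (t - x0))) := by
  rw [mem_lpSupported_iff measurableSet_Icc]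
  filter_upwards [coeFn_firstDensity hα t] with v hv hvt
  rw [hv, indicator_of_notMem (notMem_subset Ioc_subset_Icc_self hvt)]

lemma fourierFunctional_firstDensity (hα : Integrable α) (ω : ℝ) {t : ℝ} (ht : x0 ≤ t) :
    fourierFunctional ω (firstDensity x0 hα t) = Aiter x0 α ω 1 t := by
  calc fourierFunctional ω (firstDensity x0 hα t)
      = ∫ v, (Ioc 0 (2 * (t - x0))).indicator
          (fun v : ℝ => (2⁻¹ * α (x0 + v / 2) : ℝ) * exp (I * ω * v)) v := by
        rw [fourierFunctional_apply]
        refine integral_congr_ae ?_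
        filter_upwards [coeFn_firstDensity hα t] with v hv
        rw [hv]
        by_cases hvt : v ∈ Ioc 0 (2 * (t - x0)) <;> simp [hvt]
    _ = ∫ v in 0..2 * (t - x0), (2⁻¹ : ℝ) • (fun s : ℝ =>
          (α s : ℂ) * exp (2 * I * (s - x0) * ω)) (x0 + v / 2) := by
        rw [integral_indicator measurableSet_Ioc, ← intervalIntegral.integral_of_le (by linarith)]
        refine intervalIntegral.integral_congr fun v _ => ?_
        simp only [real_smul]
        push_cast
        rw [mul_assoc]
        congr 3
        ring
    _ = Aiter x0 α ω 1 t := by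
        rw [integral_comp_add_half (fun s : ℝ => (α s : ℂ) * exp (2 * I * (s - x0) * ω))]
        simp [Aiter]

/-- The density of `A_ω^{j+1}(t)`. -/
noncomputable def iterDensity (x0 : ℝ) (hα : Integrable α) : ℕ → ℝ → ℝ →₁[volume] ℝ :=
  volterraIter x0 α (fun s => lpReflect (2 * (s - x0))) (firstDensity x0 hα)

lemma continuous_lpReflect_two_mul_sub :
    Continuous fun q : ℝ × (ℝ →₁[volume] ℝ) => lpReflect (2 * (q.1 - x0)) q.2 :=
  (continuous_lpReflect ENNReal.one_ne_top).comp
    (f := fun q : ℝ × (ℝ →₁[volume] ℝ) => (2 * (q.1 - x0), q.2)) (by fun_prop)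

lemma norm_iterDensity_le (hα : Integrable α) {t : ℝ} (ht : x0 ≤ t) (j : ℕ) :
    ‖iterDensity x0 hα j t‖ ≤ (∫ s in x0..t, |α s|) ^ (j + 1) / (j + 1).factorial :=
  norm_volterraIter_le (fun _ _ => hα.intervalIntegrable) (fun _ f => (norm_lpReflect _ f).le)
    (fun _ hs => (norm_firstDensity hα hs).le) ht j

lemma iterDensity_mem_lpSupported (hα : Integrable α) {t : ℝ} (ht : x0 ≤ t) (j : ℕ) :
    iterDensity x0 hα j t ∈ lpSupported ℝ 1 volume (Icc 0 (2 * (t - x0))) := by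
  refine volterraIter_mem (P := fun t => lpSupported ℝ 1 volume (Icc 0 (2 * (t - x0))))
    (fun t => isClosed_lpSupported _) (fun s t f _ hst hf => ?_)
    (fun s _ => firstDensity_mem_lpSupported hα s) ht j
  exact lpReflect_mem_lpSupported measurableSet_Icc measurableSet_Icc
    (fun v hv => ⟨by linarith [hv.2], by linarith [hv.1]⟩) hf

lemma fourierFunctional_iterDensity (hα : Integrable α) (ω : ℝ) {t : ℝ} (ht : x0 ≤ t) (j : ℕ) :
    fourierFunctional ω (iterDensity x0 hα j t) = Aiter x0 α ω (j + 1) t := by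
  rw [Aiter_succ_eq_volterraIter]
  refine map_volterraIter (fun _ _ => hα.intervalIntegrable) continuous_lpReflect_two_mul_sub
    (continuous_firstDensity hα) (fun s f => ?_)
    (fun s hs => fourierFunctional_firstDensity hα ω hs) ht j
  rw [fourierFunctional_lpReflect]
  congr 2
  push_cast
  ring

lemma summable_iterDensity (hα : Integrable α) {y : ℝ} (hy : x0 ≤ y) :
    Summable fun j => iterDensity x0 hα j y :=
  .of_norm_bounded (hasSum_pow_succ_div_factorial _).summable (norm_iterDensity_le hα hy)

/-- The density of `E_α^{(x0,y)} - 1`. -/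
noncomputable def harmonicDensity (x0 y : ℝ) (hα : Integrable α) : ℝ →₁[volume] ℝ :=
  ∑' j, iterDensity x0 hα j y

lemma norm_harmonicDensity_le (hα : Integrable α) {y : ℝ} (hy : x0 ≤ y) :
    ‖harmonicDensity x0 y hα‖ ≤ Real.exp (∫ s in x0..y, |α s|) - 1 :=
  tsum_of_norm_bounded (hasSum_pow_succ_div_factorial _) (norm_iterDensity_le hα hy)

lemma harmonicDensity_mem_lpSupported (hα : Integrable α) {y : ℝ} (hy : x0 ≤ y) :
    harmonicDensity x0 y hα ∈ lpSupported ℝ 1 volume (Icc 0 (2 * (y - x0))) :=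
  tsum_mem (isClosed_lpSupported _) (iterDensity_mem_lpSupported hα hy)

lemma harmE_eq_one_add_fourierFunctional (hα : Integrable α) (ω : ℝ) {y : ℝ} (hy : x0 ≤ y) :
    harmE x0 y α ω = 1 + fourierFunctional ω (harmonicDensity x0 y hα) := by
  refine harmE_eq_of_hasSum ?_
  simp only [← fourierFunctional_iterDensity hα ω hy]
  exact (summable_iterDensity hα hy).hasSum.mapL (fourierFunctional ω)

theorem exists_density_harmE (hα : Integrable α) {y : ℝ} (hy : x0 ≤ y) :
    ∃ g : ℝ → ℂ, (∀ v ∉ Icc 0 (2 * (y - x0)), g v = 0) ∧ Integrable g ∧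
      ∫ v, ‖g v‖ ≤ Real.exp (∫ s in x0..y, |α s|) - 1 ∧
      ∀ ω : ℝ, harmE x0 y α ω = 1 + ∫ v, g v * exp (I * ω * v) := by
  set f := harmonicDensity x0 y hα
  set f₀ : ℝ → ℝ := (Icc 0 (2 * (y - x0))).indicator f
  have hf₀ : f₀ =ᵐ[volume] f :=
    indicator_ae_eq_of_mem_lpSupported measurableSet_Icc (harmonicDensity_mem_lpSupported hα hy)
  refine ⟨fun v => f₀ v, fun v hv => by simp [f₀, hv],
    ((L1.integrable_coeFn f).congr hf₀.symm).ofReal, ?_, fun ω => ?_⟩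
  · calc ∫ v, ‖(f₀ v : ℂ)‖
        = ∫ v, ‖f v‖ := integral_congr_ae <| by
          filter_upwards [hf₀] with v hv
          rw [hv, norm_real]
      _ = ‖f‖ := (L1.norm_eq_integral_norm f).symm
      _ ≤ Real.exp (∫ s in x0..y, |α s|) - 1 := norm_harmonicDensity_le hα hy
  · rw [harmE_eq_one_add_fourierFunctional hα ω hy, fourierFunctional_apply]
    refine congrArg (1 + ·) (integral_congr_ae ?_)
    filter_upwards [hf₀] with v hv
    rw [hv]

end Density

end HarmonicDensity

/-- Proposition (prop-harmonic-2)(iii): `h = E_α^{(x0,y)} − 1` is the Fourier transform of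
an integrable density `g` supported in `[0, 2(y − x0)]` with `∫|g| ≤ e^{‖α‖} − 1`. -/
theorem harmonic_exponential_fourier_representation
    (x0 x1 y : ℝ) (hx : x0 < x1) (hy : y ∈ Set.Ioc x0 x1)
    (α : ℝ → ℝ) (hα : IntegrableOn α (Set.Ioo x0 x1))
    (N : ℝ) (hN : N = ∫ x in x0..x1, |α x|) :
    ∃ g : ℝ → ℂ,
      (∀ t ∉ Set.Icc (0 : ℝ) (2 * (y - x0)), g t = 0) ∧
      Integrable g ∧
      (∫ t : ℝ, ‖g t‖) ≤ Real.exp N - 1 ∧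
      ∀ ω : ℝ, harmE x0 y α (ω : ℂ)
        = 1 + ∫ t : ℝ, g t * Complex.exp (Complex.I * (ω : ℂ) * (t : ℂ)) := by
  have hα' : IntegrableOn α (Set.Ioc x0 x1) := (integrableOn_Ioc_iff_integrableOn_Ioo).2 hα
  set β : ℝ → ℝ := (Set.Ioc x0 y).indicator α
  have hβ : Integrable β :=
    (hα'.mono_set (Set.Ioc_subset_Ioc_right hy.2)).integrable_indicator measurableSet_Ioc
  have hαβ : Set.EqOn α β (Set.Ioc x0 y) := Set.eqOn_indicator.symm
  have hnorm : ∫ s in x0..y, |β s| ≤ N := by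
    rw [intervalIntegral.integral_of_le hy.1.le, hN, intervalIntegral.integral_of_le hx.le,
      setIntegral_congr_fun measurableSet_Ioc fun s hs => congrArg abs (hαβ hs).symm]
    exact setIntegral_mono_set hα'.abs (ae_of_all _ fun s => abs_nonneg (α s))
      (Set.Ioc_subset_Ioc_right hy.2).eventuallyLE
  obtain ⟨g, hsupp, hint, hbound, hE⟩ := exists_density_harmE hβ hy.1.le
  refine ⟨g, hsupp, hint, hbound.trans (by gcongr), fun ω => ?_⟩
  rw [harmE_congr hαβ hy.1.le, hE]
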